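/- arXiv:1606.03758 — 2 statements merged into one kernel-verified Lean document; each statement's English description precedes it below -/
import Mathlib

section
/- For every linear tree-to-word transducer M there exists a linear tree-to-word transducer M' such that M' is equivalent to M, M' is earliest, and M and M' are same-ordered. -/
namespace LTWpaper

/-- Trees over a ranked alphabet: a symbol of arity `n` with `n` children. -/
inductive RTree (F : Type) (ar : F → ℕ) : Type
  | node (f : F) (ts : Fin (ar f) → RTree F ar) : RTree F ar

/-- A rule right-hand side `u₀ q₁(x_{σ(1)}) u₁ … q_n(x_{σ(n)}) u_n`:
`word i` is `u_i` (for `i : Fin (n+1)`), `st i` is `q_{i+1}` (for `i : Fin n`),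
and position `i` reads the subtree `x_{perm i}`. -/
structure LTWRule (Δ Q : Type) (n : ℕ) where
  word : Fin (n + 1) → List Δ
  st : Fin n → Q
  perm : Equiv.Perm (Fin n)

/-- A (deterministic) linear tree-to-word transducer with axiom `pre init(x) post`. -/
structure LTW (F : Type) (ar : F → ℕ) (Δ Q : Type) where
  pre : List Δ
  init : Q
  post : List Δ
  rules : Q → (f : F) → Option (LTWRule Δ Q (ar f))

/-- `u 0 ++ ws 0 ++ u 1 ++ ws 1 ++ ⋯ ++ ws (n-1) ++ u n`. -/
def interleave {Δ : Type} (n : ℕ) (u : Fin (n + 1) → List Δ) (ws : Fin n → List Δ) :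
    List Δ :=
  u 0 ++ (List.finRange n).foldr (fun i acc => ws i ++ u i.succ ++ acc) []

/-- The partial function `⟦M⟧_q` computed by state `q`. -/
def LTW.semState {F Δ Q : Type} {ar : F → ℕ} (M : LTW F ar Δ Q) :
    RTree F ar → Q → Option (List Δ)
  | .node f ts, q =>
    match M.rules q f with
    | none => none
    | some r =>
      if h : ∀ i : Fin (ar f), (M.semState (ts (r.perm i)) (r.st i)).isSome then
        some (interleave (ar f) r.word fun i => (M.semState (ts (r.perm i)) (r.st i)).get (h i))
      else none

/-- The partial function `⟦M⟧` computed by the transducer. -/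
def LTW.sem {F Δ Q : Type} {ar : F → ℕ} (M : LTW F ar Δ Q) (t : RTree F ar) :
    Option (List Δ) :=
  (M.semState t M.init).map fun w => M.pre ++ w ++ M.post

/-- The output language `L_q` of a state. -/
def LTW.lang {F Δ Q : Type} {ar : F → ℕ} (M : LTW F ar Δ Q) (q : Q) : Set (List Δ) :=
  {w | ∃ t, M.semState t q = some w}

/-- Standing assumption: every state has nonempty domain. -/
def LTW.NonemptyDoms {F Δ Q : Type} {ar : F → ℕ} (M : LTW F ar Δ Q) : Prop :=
  ∀ q : Q, ∃ t w, M.semState t q = some w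

/-- `w^n`, the `n`-fold concatenation of the word `w`. -/
def listPow {Δ : Type} (w : List Δ) : ℕ → List Δ
  | 0 => []
  | n + 1 => w ++ listPow w n

/-- `lcp L = ε`: the only common prefix of all words of `L` is the empty word. -/
def LcpEps {Δ : Type} (L : Set (List Δ)) : Prop :=
  ∀ w : List Δ, (∀ v ∈ L, w <+: v) → w = []

/-- `lcs L = ε`: the only common suffix of all words of `L` is the empty word. -/
def LcsEps {Δ : Type} (L : Set (List Δ)) : Prop :=
  ∀ w : List Δ, (∀ v ∈ L, w <:+ v) → w = []

/-- A language is earliest if `lcp L = lcs L = ε`. -/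
def EarliestLang {Δ : Type} (L : Set (List Δ)) : Prop := LcpEps L ∧ LcsEps L

/-- `L ⊆ w*`. -/
def SubPow {Δ : Type} (w : List Δ) (L : Set (List Δ)) : Prop :=
  ∀ v ∈ L, ∃ n : ℕ, v = listPow w n

/-- `L` is periodic of period `w`: `w` is a smallest word with `L ⊆ w*`. -/
def PeriodicOf {Δ : Type} (L : Set (List Δ)) (w : List Δ) : Prop :=
  SubPow w L ∧ ∀ w' : List Δ, SubPow w' L → w.length ≤ w'.length

/-- `L` is periodic. -/
def Periodic {Δ : Type} (L : Set (List Δ)) : Prop := ∃ w, PeriodicOf L w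

/-- `L` is quasi-periodic on the left of handle `u` and period `w`:
`w` is a smallest word with `L ⊆ u w*`. -/
def QPLeftOf {Δ : Type} (L : Set (List Δ)) (u w : List Δ) : Prop :=
  (∀ v ∈ L, ∃ n : ℕ, v = u ++ listPow w n) ∧
  ∀ w' : List Δ, (∀ v ∈ L, ∃ n : ℕ, v = u ++ listPow w' n) → w.length ≤ w'.length

/-- `L` is quasi-periodic on the right of handle `u` and period `w`:
`w` is a smallest word with `L ⊆ w* u`. -/
def QPRightOf {Δ : Type} (L : Set (List Δ)) (u w : List Δ) : Prop :=
  (∀ v ∈ L, ∃ n : ℕ, v = listPow w n ++ u) ∧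
  ∀ w' : List Δ, (∀ v ∈ L, ∃ n : ℕ, v = listPow w' n ++ u) → w.length ≤ w'.length

/-- `L` is quasi-periodic (on the left or on the right). -/
def QuasiPeriodic {Δ : Type} (L : Set (List Δ)) : Prop :=
  (∃ u w, QPLeftOf L u w) ∨ (∃ u w, QPRightOf L u w)

/-- The language `L u = { v u : v ∈ L }`. -/
def appendLang {Δ : Type} (L : Set (List Δ)) (u : List Δ) : Set (List Δ) :=
  {v | ∃ x ∈ L, v = x ++ u}

/-- The language `L₁ u L₂ = { a u b : a ∈ L₁, b ∈ L₂ }`. -/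
def pairLang {Δ : Type} (L₁ : Set (List Δ)) (u : List Δ) (L₂ : Set (List Δ)) :
    Set (List Δ) :=
  {v | ∃ a ∈ L₁, ∃ b ∈ L₂, v = a ++ u ++ b}

/-- An LTW is earliest: every state `q` satisfies `lcp L_q = lcs L_q = ε`, and in every rule
every part `qᵢ(x) uᵢ` satisfies `lcp (L_{qᵢ} uᵢ) = ε`. -/
def LTW.Earliest {F Δ Q : Type} {ar : F → ℕ} (M : LTW F ar Δ Q) : Prop :=
  (∀ q : Q, EarliestLang (M.lang q)) ∧
  ∀ (q : Q) (f : F) (r : LTWRule Δ Q (ar f)), M.rules q f = some r →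
    ∀ i : Fin (ar f), LcpEps (appendLang (M.lang (r.st i)) (r.word i.succ))

/-- An erasing state: `L_q = {ε}`. -/
def LTW.Erasing {F Δ Q : Type} {ar : F → ℕ} (M : LTW F ar Δ Q) (q : Q) : Prop :=
  M.lang q = {([] : List Δ)}

/-- Erase-ordered: in every rule, if `qᵢ` is erasing then every later `q_j` is erasing,
`σ(i) ≤ σ(j)` and `u_j = ε`. -/
def LTW.EraseOrdered {F Δ Q : Type} {ar : F → ℕ} (M : LTW F ar Δ Q) : Prop :=
  ∀ (q : Q) (f : F) (r : LTWRule Δ Q (ar f)), M.rules q f = some r →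
    ∀ i j : Fin (ar f), M.Erasing (r.st i) → i ≤ j →
      M.Erasing (r.st j) ∧ r.perm i ≤ r.perm j ∧ r.word j.succ = []

/-- Co-reachable pairs of states of two transducers over the same input alphabet. -/
inductive CoReach {F Δ Q₁ Q₂ : Type} {ar : F → ℕ}
    (M₁ : LTW F ar Δ Q₁) (M₂ : LTW F ar Δ Q₂) : Q₁ → Q₂ → Prop
  | base : CoReach M₁ M₂ M₁.init M₂.init
  | step {q₁ : Q₁} {q₂ : Q₂} {f : F} {r₁ : LTWRule Δ Q₁ (ar f)} {r₂ : LTWRule Δ Q₂ (ar f)}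
      {i j : Fin (ar f)} :
      CoReach M₁ M₂ q₁ q₂ → M₁.rules q₁ f = some r₁ → M₂.rules q₂ f = some r₂ →
      r₁.perm i = r₂.perm j → CoReach M₁ M₂ (r₁.st i) (r₂.st j)

/-- Two LTWs are same-ordered: co-reachable states either both lack a rule for `f`,
or have rules for `f` with the same permutation. -/
def SameOrdered {F Δ Q₁ Q₂ : Type} {ar : F → ℕ}
    (M₁ : LTW F ar Δ Q₁) (M₂ : LTW F ar Δ Q₂) : Prop :=
  ∀ q₁ q₂, CoReach M₁ M₂ q₁ q₂ → ∀ f : F,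
    (M₁.rules q₁ f = none ∧ M₂.rules q₂ f = none) ∨
    ∃ (r₁ : LTWRule Δ Q₁ (ar f)) (r₂ : LTWRule Δ Q₂ (ar f)),
      M₁.rules q₁ f = some r₁ ∧ M₂.rules q₂ f = some r₂ ∧ r₁.perm = r₂.perm

/-- `Accessible q p`: state `p` is accessible from state `q`. -/
inductive LTW.Accessible {F Δ Q : Type} {ar : F → ℕ} (M : LTW F ar Δ Q) : Q → Q → Prop
  | refl (q : Q) : M.Accessible q q
  | step {q p : Q} {f : F} {r : LTWRule Δ Q (ar f)} (i : Fin (ar f)) :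
      M.Accessible q p → M.rules p f = some r → M.Accessible q (r.st i)

/-- Partial normal form. -/
def LTW.PartialNormalForm {F Δ Q : Type} {ar : F → ℕ} (M : LTW F ar Δ Q) : Prop :=
  (∀ q : Q, QuasiPeriodic (M.lang q) → EarliestLang (M.lang q)) ∧
  M.EraseOrdered ∧
  ∀ (q : Q) (f : F) (r : LTWRule Δ Q (ar f)), M.rules q f = some r →
    ∀ (i : ℕ) (hi : i + 1 < ar f),
      QuasiPeriodic (pairLang (M.lang (r.st ⟨i, Nat.lt_of_succ_lt hi⟩))
          (r.word (Fin.succ ⟨i, Nat.lt_of_succ_lt hi⟩)) (M.lang (r.st ⟨i + 1, hi⟩))) →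
      EarliestLang (pairLang (M.lang (r.st ⟨i, Nat.lt_of_succ_lt hi⟩))
          (r.word (Fin.succ ⟨i, Nat.lt_of_succ_lt hi⟩)) (M.lang (r.st ⟨i + 1, hi⟩))) ∧
      r.perm ⟨i, Nat.lt_of_succ_lt hi⟩ < r.perm ⟨i + 1, hi⟩

/-!
In a rule, a part `q(x) w` outputs the language `L w`, where `L = lcp(L) C` for the output language
`L` of `q`. If `v w'` is the word `w` split at the longest common prefix `v` of `C w`, then
`L w = lcp(L) v (v⁻¹ C v) w'`, so `lcp(L) v` can be moved to the left of the part, with `w'`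
remaining on its right, provided that the new transducer has a state for the pair `(q, v)` with
output language `v⁻¹ C v`. Doing this from right to left in every rule leaves nothing more to be
pushed.

Only finitely many languages `v⁻¹ C v` arise: if `v` is long compared with `x, y ∈ C`, then both
are periods of `v`, so `x` and `y` commute; and if `x ≠ ε` commutes with all of `C`, cutting `x`
off the front of `v` does not change `v⁻¹ C v`.

Common suffixes are removed by pushing in the mirror image of the transducer, and common prefixes
by pushing afterwards in the transducer itself. The second step creates no common suffixes: either
`ε ∈ v⁻¹ C v`, or `v = ε` and the language is `C`, which inherits `lcs(C) = ε` from `L`.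
-/

section Words

variable {Δ : Type}

/-! ### Common prefixes and carries -/

theorem exists_prefix_lcpEps_residual {L : Set (List Δ)} (hL : L.Nonempty) :
    ∃ p : List Δ, (∀ x ∈ L, p <+: x) ∧ LcpEps {y | p ++ y ∈ L} := by
  obtain ⟨x₀, hx₀⟩ := hL
  let IsLength (n : ℕ) : Prop := ∃ p : List Δ, p.length = n ∧ ∀ x ∈ L, p <+: x
  have isLength_zero : IsLength 0 := ⟨[], rfl, fun _ _ => List.nil_prefix⟩
  classical
  obtain ⟨p, hlen, hp⟩ := Nat.findGreatest_spec (Nat.zero_le x₀.length) isLength_zero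
  refine ⟨p, hp, fun w hw => ?_⟩
  have hpw : ∀ x ∈ L, p ++ w <+: x := by
    intro x hx
    obtain ⟨y, rfl⟩ := hp x hx
    exact (List.prefix_append_right_inj p).mpr (hw y hx)
  have hmax : (p ++ w).length ≤ p.length :=
    hlen ▸ Nat.le_findGreatest (hpw x₀ hx₀).length_le ⟨p ++ w, rfl, hpw⟩
  exact List.length_eq_zero_iff.mp (by rw [List.length_append] at hmax; omega)

/-- The longest common prefix of `L`; its value on the empty language is arbitrary. -/
noncomputable def lcp (L : Set (List Δ)) : List Δ :=
  Classical.epsilon fun p => (∀ x ∈ L, p <+: x) ∧ LcpEps {y | p ++ y ∈ L}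

/-- The language `lcp(L)⁻¹ L` that remains once the longest common prefix is removed. -/
def core (L : Set (List Δ)) : Set (List Δ) := {y | lcp L ++ y ∈ L}

theorem lcp_prefix {L : Set (List Δ)} {x : List Δ} (hx : x ∈ L) : lcp L <+: x :=
  (Classical.epsilon_spec (exists_prefix_lcpEps_residual ⟨x, hx⟩)).1 x hx

theorem lcpEps_core {L : Set (List Δ)} (hL : L.Nonempty) : LcpEps (core L) :=
  (Classical.epsilon_spec (exists_prefix_lcpEps_residual hL)).2

theorem core_nonempty {L : Set (List Δ)} (hL : L.Nonempty) : (core L).Nonempty := by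
  obtain ⟨x, hx⟩ := hL
  obtain ⟨y, rfl⟩ := lcp_prefix hx
  exact ⟨y, hx⟩

theorem LcsEps.core {L : Set (List Δ)} (h : LcsEps L) : LcsEps (core L) := by
  refine fun w hw => h w fun x hx => ?_
  obtain ⟨y, rfl⟩ := lcp_prefix hx
  exact (hw y hx).trans (List.suffix_append _ _)

theorem lcpEps_of_nil_mem {L : Set (List Δ)} (h : [] ∈ L) : LcpEps L :=
  fun _ hw => List.prefix_nil.mp (hw [] h)

theorem lcsEps_of_nil_mem {L : Set (List Δ)} (h : [] ∈ L) : LcsEps L :=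
  fun _ hw => List.suffix_nil.mp (hw [] h)

theorem LcpEps.eq_nil_of_forall_prefix_append {C : Set (List Δ)} (hC : LcpEps C)
    (hnil : [] ∉ C) {v w : List Δ} (hv : ∀ x ∈ C, v <+: x ++ w) : v = [] := by
  cases v with
  | nil => rfl
  | cons a v =>
    refine absurd (hC [a] fun x hx => ?_) (List.cons_ne_nil a [])
    cases x with
    | nil => exact absurd hx hnil
    | cons b x =>
      obtain ⟨rfl, -⟩ := List.cons_prefix_cons.mp (hv _ hx)
      exact ⟨x, rfl⟩

theorem LcpEps.eq_nil_of_forall_prefix_append_append {A B : Set (List Δ)} (hA : LcpEps A)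
    (hB : LcpEps B) (hne : B.Nonempty) {w : List Δ}
    (hw : ∀ a ∈ A, ∀ b ∈ B, w <+: a ++ b) : w = [] := by
  by_cases hnil : [] ∈ A
  · exact hB w (hw [] hnil)
  · obtain ⟨b, hb⟩ := hne
    exact hA.eq_nil_of_forall_prefix_append hnil fun a ha => hw a ha b hb

theorem LcpEps.prefix_of_forall_prefix_append {R : Set (List Δ)} (hR : LcpEps R)
    (hne : R.Nonempty) {a b : List Δ} (h : ∀ z ∈ R, a <+: b ++ z) : a <+: b := by
  obtain ⟨z₀, hz₀⟩ := hne
  rcases List.prefix_or_prefix_of_prefix (h z₀ hz₀) (List.prefix_append b z₀) with hab | ⟨c, rfl⟩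
  · exact hab
  · have hc : c = [] := hR c fun z hz => (List.prefix_append_right_inj b).mp (h z hz)
    rw [hc, List.append_nil]

/-- `v` is a carry for `C` if it can be moved from the right of every word of `C` to its left:
every `y ∈ C` satisfies `y v = v d` for some `d`. -/
def IsCarry (C : Set (List Δ)) (v : List Δ) : Prop := ∀ y ∈ C, v <+: y ++ v

/-- The language `v⁻¹ C v` of the conjugates by `v` of the words of `C`. -/
def conj (C : Set (List Δ)) (v : List Δ) : Set (List Δ) := {d | ∃ y ∈ C, y ++ v = v ++ d}

theorem IsCarry.conj_nonempty {C : Set (List Δ)} {v : List Δ} (hv : IsCarry C v)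
    (hC : C.Nonempty) : (conj C v).Nonempty := by
  obtain ⟨y, hy⟩ := hC
  obtain ⟨d, hd⟩ := hv y hy
  exact ⟨d, y, hy, hd.symm⟩

theorem nil_mem_conj_or_conj_eq {C : Set (List Δ)} (hC : LcpEps C) {v : List Δ}
    (hv : IsCarry C v) : [] ∈ conj C v ∨ conj C v = C := by
  by_cases hnil : [] ∈ C
  · exact .inl ⟨[], hnil, (List.append_nil v).symm⟩
  · obtain rfl : v = [] := hC.eq_nil_of_forall_prefix_append hnil hv
    exact .inr (by simp [conj])

theorem IsCarry.lcpEps_conj {C : Set (List Δ)} {v : List Δ} (hv : IsCarry C v)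
    (hC : LcpEps C) : LcpEps (conj C v) := by
  rcases nil_mem_conj_or_conj_eq hC hv with hnil | heq
  · exact lcpEps_of_nil_mem hnil
  · rwa [heq]

theorem IsCarry.lcsEps_conj {C : Set (List Δ)} {v : List Δ} (hv : IsCarry C v)
    (hC : LcpEps C) (hC' : LcsEps C) : LcsEps (conj C v) := by
  rcases nil_mem_conj_or_conj_eq hC hv with hnil | heq
  · exact lcsEps_of_nil_mem hnil
  · rwa [heq]

theorem LcpEps.isCarry_of_forall_prefix_append {C : Set (List Δ)} (hC : LcpEps C)
    {v w : List Δ} (hv : ∀ x ∈ C, v <+: x ++ w) : v <+: w ∧ IsCarry C v := by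
  have hvw : v <+: w := by
    by_cases hnil : [] ∈ C
    · exact hv [] hnil
    · rw [hC.eq_nil_of_forall_prefix_append hnil hv]
      exact List.nil_prefix
  refine ⟨hvw, fun x hx => List.prefix_of_prefix_length_le (hv x hx) ?_ (by simp)⟩
  exact (List.prefix_append_right_inj x).mpr hvw

theorem LcpEps.exists_isCarry_lcpEps_appendLang {C : Set (List Δ)} (hC : LcpEps C)
    (hne : C.Nonempty) (w : List Δ) :
    ∃ v w', w = v ++ w' ∧ IsCarry C v ∧ LcpEps (appendLang (conj C v) w') := by
  have hprefix : ∀ x ∈ C, lcp (appendLang C w) <+: x ++ w :=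
    fun x hx => lcp_prefix ⟨x, hx, rfl⟩
  obtain ⟨⟨w', hw⟩, hcarry⟩ := hC.isCarry_of_forall_prefix_append hprefix
  have hne' : (appendLang C w).Nonempty := hne.imp' (· ++ w) fun x hx => ⟨x, hx, rfl⟩
  refine ⟨_, w', hw.symm, hcarry, fun z hz => lcpEps_core hne' z ?_⟩
  rintro y ⟨x, hx, hy⟩
  obtain ⟨d, hd⟩ := hcarry x hx
  obtain rfl : y = d ++ w' := by
    rw [← hw, ← List.append_assoc, ← hd, List.append_assoc] at hy
    simpa only [List.append_assoc, hw, List.append_cancel_left_eq] using hy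
  exact hz _ ⟨d, ⟨x, hx, hd.symm⟩, rfl⟩

/-! ### Finitely many carries suffice -/

/-- `v` and `v'` conjugate every word of `C` to the same word. -/
def CarryEquiv (C : Set (List Δ)) (v v' : List Δ) : Prop :=
  ∀ y ∈ C, ∀ d, y ++ v = v ++ d ↔ y ++ v' = v' ++ d

/-- A carry is reduced if it is shortest in its class of equivalent carries. Only reduced carries
are stored in the states of the constructed transducer, which keeps them finite in number. -/
def IsReducedCarry (C : Set (List Δ)) (v : List Δ) : Prop :=
  IsCarry C v ∧ ∀ v', CarryEquiv C v' v → v.length ≤ v'.length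

theorem IsCarry.exists_isReducedCarry {C : Set (List Δ)} {v : List Δ} (hv : IsCarry C v) :
    ∃ v', IsReducedCarry C v' ∧ CarryEquiv C v' v := by
  obtain ⟨v', hequiv, hmin⟩ :=
    (measure List.length).wf.has_min {v' | CarryEquiv C v' v} ⟨v, fun _ _ _ => Iff.rfl⟩
  refine ⟨v', ⟨fun y hy => ?_, fun u hu => not_lt.mp (hmin u fun y hy d => ?_)⟩, hequiv⟩
  · obtain ⟨d, hd⟩ := hv y hy
    exact ⟨d, ((hequiv y hy d).mpr hd.symm).symm⟩
  · exact (hu y hy d).trans (hequiv y hy d)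

theorem CarryEquiv.conj_eq {C : Set (List Δ)} {v v' : List Δ} (h : CarryEquiv C v v') :
    conj C v = conj C v' := by
  ext d
  exact exists_congr fun y => and_congr_right fun hy => h y hy d

theorem LcpEps.exists_isReducedCarry_lcpEps_appendLang {C : Set (List Δ)} (hC : LcpEps C)
    (hne : C.Nonempty) (w : List Δ) :
    ∃ a v w', IsReducedCarry C v ∧ LcpEps (appendLang (conj C v) w') ∧
      ∀ y ∈ C, ∀ d, y ++ v = v ++ d → y ++ w = a ++ d ++ w' := by
  obtain ⟨a, w', rfl, ha, hlcp⟩ := hC.exists_isCarry_lcpEps_appendLang hne w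
  obtain ⟨v, hv, hequiv⟩ := ha.exists_isReducedCarry
  refine ⟨a, v, w', hv, by rwa [hequiv.conj_eq], fun y hy d hd => ?_⟩
  rw [← List.append_assoc, (hequiv y hy d).mp hd]

theorem length_listPow (x : List Δ) (n : ℕ) : (listPow x n).length = n * x.length := by
  induction n with
  | zero => simp [listPow]
  | succ n ih => rw [listPow, List.length_append, ih, Nat.succ_mul, Nat.add_comm]

theorem prefix_listPow_append {x v : List Δ} (h : v <+: x ++ v) (n : ℕ) :
    v <+: listPow x n ++ v := by
  induction n with
  | zero => exact List.prefix_rfl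
  | succ n ih =>
    rw [listPow, List.append_assoc]
    exact h.trans ((List.prefix_append_right_inj x).mpr ih)

theorem prefix_of_prefix_append {x v : List Δ} (h : v <+: x ++ v) (hl : x.length ≤ v.length) :
    x <+: v :=
  List.prefix_of_prefix_length_le (List.prefix_append x v) h hl

theorem append_prefix_of_prefix_append {x y v : List Δ} (hx : v <+: x ++ v) (hy : v <+: y ++ v)
    (hl : x.length + y.length ≤ v.length) : x ++ y <+: v :=
  List.prefix_of_prefix_length_le
    ((List.prefix_append_right_inj x).mpr (prefix_of_prefix_append hy (by omega))) hx
    (by rwa [List.length_append])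

-- `x` and `y` are both periods of `v`, so `x y` and `y x` are prefixes of `v` of equal length.
theorem append_comm_of_prefix_append {x y v : List Δ} (hx : v <+: x ++ v) (hy : v <+: y ++ v)
    (hl : x.length + y.length ≤ v.length) : x ++ y = y ++ x := by
  have hlen : (x ++ y).length = (y ++ x).length := by
    rw [List.length_append, List.length_append, Nat.add_comm]
  exact (List.prefix_of_prefix_length_le (append_prefix_of_prefix_append hx hy hl)
    (append_prefix_of_prefix_append hy hx (by omega)) hlen.le).eq_of_length hlen

-- If `v = x v₁` were longer than `x`, then the shorter `v₁` would be an equivalent carry.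
theorem IsReducedCarry.length_le_of_append_comm {C : Set (List Δ)} {v x : List Δ}
    (hv : IsReducedCarry C v) (hx : x ∈ C) (hx₀ : x ≠ []) (hcomm : ∀ y ∈ C, x ++ y = y ++ x) :
    v.length ≤ x.length := by
  by_contra! hlt
  obtain ⟨v₁, rfl⟩ := prefix_of_prefix_append (hv.1 x hx) hlt.le
  have hequiv : CarryEquiv C v₁ (x ++ v₁) := by
    intro y hy d
    rw [← List.append_assoc, ← hcomm y hy, List.append_assoc, List.append_assoc,
      List.append_cancel_left_eq]
  have hle := hv.2 v₁ hequiv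
  have hpos := List.length_pos_iff.mpr hx₀
  rw [List.length_append] at hle
  omega

theorem exists_length_le_of_isReducedCarry {C : Set (List Δ)} {x : List Δ} (hx : x ∈ C)
    (hx₀ : x ≠ []) : ∃ N, ∀ v, IsReducedCarry C v → v.length ≤ N := by
  by_cases hcomm : ∀ y ∈ C, x ++ y = y ++ x
  · exact ⟨x.length, fun v hv => hv.length_le_of_append_comm hx hx₀ hcomm⟩
  · push Not at hcomm
    obtain ⟨y, hy, hne⟩ := hcomm
    refine ⟨x.length + y.length, fun v hv => ?_⟩
    by_contra! hlt
    exact hne (append_comm_of_prefix_append (hv.1 x hx) (hv.1 y hy) hlt.le)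

theorem finite_isCarry_length_le {C : Set (List Δ)} {x : List Δ} (hx : x ∈ C) (hx₀ : x ≠ [])
    (N : ℕ) : {v | IsCarry C v ∧ v.length ≤ N}.Finite := by
  refine (List.finite_toSet (listPow x N).inits).subset fun v hv => ?_
  have hlen : v.length ≤ (listPow x N).length := by
    rw [length_listPow]
    exact hv.2.trans (Nat.le_mul_of_pos_right N (List.length_pos_iff.mpr hx₀))
  exact List.mem_inits _ _ |>.mpr <| List.prefix_of_prefix_length_le
    (prefix_listPow_append (hv.1 x hx) N) (List.prefix_append _ _) hlen

theorem finite_isReducedCarry (C : Set (List Δ)) : {v | IsReducedCarry C v}.Finite := by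
  by_cases htriv : ∀ y ∈ C, y = []
  · refine (Set.finite_singleton []).subset fun v hv => ?_
    have hequiv : CarryEquiv C [] v := by
      intro y hy d
      rw [htriv y hy]
      simp
    exact List.length_eq_zero_iff.mp (Nat.le_zero.mp (hv.2 [] hequiv))
  · push Not at htriv
    obtain ⟨x, hx, hx₀⟩ := htriv
    obtain ⟨N, hN⟩ := exists_length_le_of_isReducedCarry hx hx₀
    exact (finite_isCarry_length_le hx hx₀ N).subset fun v hv => ⟨hv.1, hN v hv⟩

/-! ### Interleavings -/

theorem interleave_zero (u : Fin 1 → List Δ) (ws : Fin 0 → List Δ) :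
    interleave 0 u ws = u 0 := by
  simp [interleave]

theorem interleave_succ {n : ℕ} (u : Fin (n + 2) → List Δ) (ws : Fin (n + 1) → List Δ) :
    interleave (n + 1) u ws = u 0 ++ ws 0 ++ interleave n (Fin.tail u) (Fin.tail ws) := by
  simp [interleave, List.finRange_succ, List.foldr_map, Fin.tail]

theorem interleave_succ_last {n : ℕ} (u : Fin (n + 2) → List Δ) (ws : Fin (n + 1) → List Δ) :
    interleave (n + 1) u ws =
      interleave n (Fin.init u) (Fin.init ws) ++ ws (Fin.last n) ++ u (Fin.last (n + 1)) := by
  induction n with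
  | zero => simp [interleave_succ, interleave_zero, Fin.tail, Fin.init]
  | succ n ih =>
    rw [interleave_succ, ih, interleave_succ (Fin.init u), Fin.tail_init_eq_init_tail,
      Fin.tail_init_eq_init_tail]
    simp [Fin.tail, Fin.init]

theorem interleave_cons_append {n : ℕ} (a b : List Δ) (u ws : Fin n → List Δ) :
    interleave n (Fin.cons (a ++ b) u) ws = a ++ interleave n (Fin.cons b u) ws := by
  simp [interleave]

theorem interleave_eq_head_append {n : ℕ} (u : Fin (n + 1) → List Δ) (ws : Fin n → List Δ) :
    interleave n u ws = u 0 ++ interleave n (Fin.cons [] (Fin.tail u)) ws := by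
  rw [← interleave_cons_append, List.append_nil, Fin.cons_self_tail]

theorem interleave_update_last {n : ℕ} (u : Fin (n + 1) → List Δ) (ws : Fin n → List Δ)
    (v : List Δ) :
    interleave n (Function.update u (Fin.last n) (u (Fin.last n) ++ v)) ws =
      interleave n u ws ++ v := by
  cases n with
  | zero => simp [interleave_zero]
  | succ n => simp [interleave_succ_last, Fin.init_update_last]

theorem interleave_reverse {n : ℕ} (u : Fin (n + 1) → List Δ) (ws : Fin n → List Δ) :
    interleave n (fun i => (u i.rev).reverse) (fun i => (ws i.rev).reverse) =
      (interleave n u ws).reverse := by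
  induction n with
  | zero => simp [interleave_zero]
  | succ n ih =>
    rw [interleave_succ, interleave_succ_last u, List.reverse_append, List.reverse_append, ← ih]
    simp [Fin.tail_def, Fin.init_def, Fin.rev_succ]

theorem lcpEps_interleave {n : ℕ} (u : Fin n → List Δ) (A : Fin n → Set (List Δ))
    (hne : ∀ i, (A i).Nonempty) (hA : ∀ i, LcpEps (appendLang (A i) (u i))) :
    LcpEps {z | ∃ ws, (∀ i, ws i ∈ A i) ∧ z = interleave n (Fin.cons [] u) ws} := by
  induction n with
  | zero => exact lcpEps_of_nil_mem ⟨Fin.elim0, Fin.rec0, (interleave_zero (Fin.cons [] u) _).symm⟩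
  | succ n ih =>
    intro w hw
    have hrest := ih (Fin.tail u) (Fin.tail A) (fun i => hne i.succ) (fun i => hA i.succ)
    choose ws hws using fun i : Fin n => hne i.succ
    refine (hA 0).eq_nil_of_forall_prefix_append_append hrest ⟨_, ws, hws, rfl⟩ ?_
    rintro _ ⟨x, hx, rfl⟩ _ ⟨xs, hxs, rfl⟩
    have hmem := hw _ ⟨Fin.cons x xs, Fin.cases hx hxs, rfl⟩
    rw [interleave_succ, interleave_eq_head_append] at hmem
    simpa using hmem

theorem prefix_head_of_forall_prefix_interleave {n : ℕ} {u : Fin (n + 1) → List Δ}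
    {A : Fin n → Set (List Δ)} (hne : ∀ i, (A i).Nonempty)
    (hA : ∀ i, LcpEps (appendLang (A i) (u i.succ))) {a : List Δ}
    (ha : ∀ ws : Fin n → List Δ, (∀ i, ws i ∈ A i) → a <+: interleave n u ws) : a <+: u 0 := by
  choose ws hws using hne
  have hrest := lcpEps_interleave (Fin.tail u) A (fun i => ⟨ws i, hws i⟩) hA
  refine hrest.prefix_of_forall_prefix_append ⟨_, ws, hws, rfl⟩ ?_
  rintro _ ⟨xs, hxs, rfl⟩
  rw [← interleave_eq_head_append]
  exact ha xs hxs

/-! ### Pushing words to the left -/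

/-- A state with output language `L` and carry `v` outputs `d` in place of `x = lcp(L) y`, where
`d = v⁻¹ y v`: the words `lcp(L)` and `v` are output to its left, and `v` is consumed on its
right. -/
def Pushes (L : Set (List Δ)) (v x d : List Δ) : Prop :=
  ∃ y ∈ core L, x = lcp L ++ y ∧ y ++ v = v ++ d

theorem Pushes.mem {L : Set (List Δ)} {v x d : List Δ} (h : Pushes L v x d) : x ∈ L := by
  obtain ⟨y, hy, rfl, -⟩ := h
  exact hy

theorem Pushes.append_eq {L : Set (List Δ)} {v x d : List Δ} (h : Pushes L v x d) :
    x ++ v = lcp L ++ v ++ d := by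
  obtain ⟨y, -, rfl, hd⟩ := h
  rw [List.append_assoc, hd, List.append_assoc]

theorem pushes_of_append_eq {L : Set (List Δ)} {v x d : List Δ} (hx : x ∈ L)
    (h : x ++ v = lcp L ++ v ++ d) : Pushes L v x d := by
  obtain ⟨y, rfl⟩ := lcp_prefix hx
  refine ⟨y, hx, rfl, ?_⟩
  simpa only [List.append_assoc, List.append_cancel_left_eq] using h

theorem Pushes.unique {L : Set (List Δ)} {v x d d' : List Δ} (h : Pushes L v x d)
    (h' : Pushes L v x d') : d = d' :=
  List.append_cancel_left (h.append_eq.symm.trans h'.append_eq)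

theorem IsCarry.lcp_append_prefix {L : Set (List Δ)} {v x : List Δ} (hv : IsCarry (core L) v)
    (hx : x ∈ L) : lcp L ++ v <+: x ++ v := by
  obtain ⟨y, rfl⟩ := lcp_prefix hx
  rw [List.append_assoc]
  exact (List.prefix_append_right_inj _).mpr (hv y hx)

theorem mem_conj_core_iff {L : Set (List Δ)} {v d : List Δ} :
    d ∈ conj (core L) v ↔ ∃ x, Pushes L v x d :=
  ⟨fun ⟨y, hy, hd⟩ => ⟨_, y, hy, rfl, hd⟩, fun ⟨_, y, hy, _, hd⟩ => ⟨y, hy, hd⟩⟩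

theorem exists_push {L : Set (List Δ)} (hL : L.Nonempty) (w : List Δ) :
    ∃ a v w', IsReducedCarry (core L) v ∧ LcpEps (appendLang (conj (core L) v) w') ∧
      ∀ x d, Pushes L v x d → x ++ w = a ++ d ++ w' := by
  obtain ⟨a, v, w', hv, hlcp, heq⟩ :=
    (lcpEps_core hL).exists_isReducedCarry_lcpEps_appendLang (core_nonempty hL) w
  refine ⟨lcp L ++ a, v, w', hv, hlcp, ?_⟩
  rintro _ d ⟨y, hy, rfl, hd⟩
  simp only [List.append_assoc, heq y hy d hd]

-- The rightmost part is pushed first; what it hands over joins the word on its left.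
theorem exists_push_interleave {n : ℕ} (u : Fin (n + 1) → List Δ) {L : Fin n → Set (List Δ)}
    (hL : ∀ i, (L i).Nonempty) :
    ∃ (u' : Fin (n + 1) → List Δ) (v : Fin n → List Δ),
      (∀ i, IsReducedCarry (core (L i)) (v i)) ∧
      (∀ i, LcpEps (appendLang (conj (core (L i)) (v i)) (u' i.succ))) ∧
      ∀ xs ds, (∀ i, Pushes (L i) (v i) (xs i) (ds i)) →
        interleave n u xs = interleave n u' ds := by
  induction n with
  | zero =>
    exact ⟨u, Fin.elim0, Fin.rec0, Fin.rec0, fun xs ds _ => by simp only [interleave_zero]⟩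
  | succ n ih =>
    obtain ⟨u', v, hv, hlcp, heq⟩ := ih (Fin.tail u) (fun i => hL i.succ)
    obtain ⟨a, v₀, w', hv₀, hlcp₀, heq₀⟩ := exists_push (hL 0) (u' 0)
    refine ⟨Fin.cons (u 0 ++ a) (Fin.cons w' (Fin.tail u')), Fin.cons v₀ v,
      Fin.cases hv₀ hv, Fin.cases hlcp₀ hlcp, fun xs ds h => ?_⟩
    calc
      _ = u 0 ++ (xs 0 ++ u' 0) ++
            interleave n (Fin.cons [] (Fin.tail u')) (Fin.tail ds) := by
        rw [interleave_succ, heq (Fin.tail xs) (Fin.tail ds) fun i => h i.succ,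
          interleave_eq_head_append u']
        simp only [List.append_assoc]
      _ = u 0 ++ (a ++ ds 0 ++ w') ++
            interleave n (Fin.cons [] (Fin.tail u')) (Fin.tail ds) := by
        rw [heq₀ _ _ (h 0)]
      _ = _ := by
        rw [interleave_succ, Fin.tail_cons, interleave_eq_head_append (Fin.cons w' _)]
        simp

theorem exists_push_rule {n : ℕ} {L : Set (List Δ)} {v : List Δ} (hv : IsCarry (core L) v)
    (u : Fin (n + 1) → List Δ) {K : Fin n → Set (List Δ)} (hK : ∀ i, (K i).Nonempty)
    (hmem : ∀ xs : Fin n → List Δ, (∀ i, xs i ∈ K i) → interleave n u xs ∈ L) :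
    ∃ (u' : Fin (n + 1) → List Δ) (vs : Fin n → List Δ),
      (∀ i, IsReducedCarry (core (K i)) (vs i)) ∧
      (∀ i, LcpEps (appendLang (conj (core (K i)) (vs i)) (u' i.succ))) ∧
      ∀ xs ds, (∀ i, Pushes (K i) (vs i) (xs i) (ds i)) →
        Pushes L v (interleave n u xs) (interleave n u' ds) := by
  obtain ⟨u', vs, hvs, hlcp, heq⟩ :=
    exists_push_interleave (Function.update u (Fin.last n) (u (Fin.last n) ++ v)) hK
  simp only [interleave_update_last] at heq
  have hhead : lcp L ++ v <+: u' 0 := by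
    refine prefix_head_of_forall_prefix_interleave
      (fun i => (hvs i).1.conj_nonempty (core_nonempty (hK i))) hlcp fun ds hds => ?_
    choose xs hxs using fun i => mem_conj_core_iff.mp (hds i)
    rw [← heq xs ds hxs]
    exact hv.lcp_append_prefix (hmem xs fun i => (hxs i).mem)
  obtain ⟨c, hc⟩ := hhead
  refine ⟨Fin.cons c (Fin.tail u'), vs, hvs, hlcp, fun xs ds h => ?_⟩
  refine pushes_of_append_eq (hmem xs fun i => (h i).mem) ?_
  rw [heq xs ds h, ← interleave_cons_append, hc, Fin.cons_self_tail]

end Words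

section Transducers

variable {F Δ Q Q' Q'' : Type} {ar : F → ℕ}

/-! ### Semantics and covers -/

theorem LTW.semState_node_eq_some_iff {M : LTW F ar Δ Q} {f : F} {ts : Fin (ar f) → RTree F ar}
    {q : Q} {w : List Δ} :
    M.semState (.node f ts) q = some w ↔
      ∃ r ws, M.rules q f = some r ∧ (∀ i, M.semState (ts (r.perm i)) (r.st i) = some (ws i)) ∧
        w = interleave (ar f) r.word ws := by
  rw [LTW.semState]
  cases M.rules q f with
  | none => simp
  | some r =>
    constructor
    · intro h
      by_cases hsome : ∀ i, (M.semState (ts (r.perm i)) (r.st i)).isSome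
      · simp only [dif_pos hsome, Option.some.injEq] at h
        exact ⟨r, _, rfl, fun i => (Option.some_get (hsome i)).symm, h.symm⟩
      · simp only [dif_neg hsome, reduceCtorEq] at h
    · rintro ⟨r', ws, hr, hws, rfl⟩
      obtain rfl := Option.some.inj hr
      simp [hws]

theorem LTW.NonemptyDoms.lang_nonempty {M : LTW F ar Δ Q} (hM : M.NonemptyDoms) (q : Q) :
    (M.lang q).Nonempty := by
  obtain ⟨t, w, hw⟩ := hM q
  exact ⟨w, t, hw⟩

-- The subtrees producing the `ws i` can be chosen independently because the rules are linear.
theorem LTW.interleave_mem_lang {M : LTW F ar Δ Q} {q : Q} {f : F} {r : LTWRule Δ Q (ar f)}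
    (hr : M.rules q f = some r) {ws : Fin (ar f) → List Δ} (hws : ∀ i, ws i ∈ M.lang (r.st i)) :
    interleave (ar f) r.word ws ∈ M.lang q := by
  choose ts hts using hws
  refine ⟨.node f (ts ∘ r.perm.symm), semState_node_eq_some_iff.mpr ⟨r, ws, hr, fun i => ?_, rfl⟩⟩
  simpa using hts i

theorem optionRel_some_left_iff {α β : Type*} {R : α → β → Prop} {a : α} {o : Option β} :
    Option.Rel R (some a) o ↔ ∃ b, o = some b ∧ R a b := by
  cases o <;> simp

theorem optionRel_some_right_iff {α β : Type*} {R : α → β → Prop} {o : Option α} {b : β} :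
    Option.Rel R o (some b) ↔ ∃ a, o = some a ∧ R a b := by
  cases o <;> simp

theorem optionRel_trans {α β γ : Type*} {R : α → β → Prop} {S : β → γ → Prop} {T : α → γ → Prop}
    (hT : ∀ {a b c}, R a b → S b c → T a c) {o : Option α} {o' : Option β} {o'' : Option γ}
    (h : Option.Rel R o o') (h' : Option.Rel S o' o'') : Option.Rel T o o'' := by
  cases h with
  | none => cases h'; exact .none
  | some hR => cases h' with | some hS => exact .some (hT hR hS)

/-- The rule `r'` lies over `r` along `π`: it reads the subtrees in the same order, in states lying
over those of `r`. The output words are unrelated. -/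
structure LTWRule.Covers {n : ℕ} (r : LTWRule Δ Q n) (π : Q' → Q) (r' : LTWRule Δ Q' n) :
    Prop where
  perm_eq : r.perm = r'.perm
  map_st : ∀ i, π (r'.st i) = r.st i

theorem LTWRule.Covers.comp {n : ℕ} {π : Q' → Q} {π' : Q'' → Q'} {r : LTWRule Δ Q n}
    {r' : LTWRule Δ Q' n} {r'' : LTWRule Δ Q'' n} (h : r.Covers π r') (h' : r'.Covers π' r'') :
    r.Covers (π ∘ π') r'' where
  perm_eq := h.perm_eq.trans h'.perm_eq
  map_st i := by rw [Function.comp_apply, h'.map_st, h.map_st]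

/-- The transducer `M'` lies over `M` along the map of states `π`: forgetting the output words, it
is a copy of `M` in which states may have been duplicated. -/
structure LTW.IsCover (M : LTW F ar Δ Q) (π : Q' → Q) (M' : LTW F ar Δ Q') :
    Prop where
  map_init : π M'.init = M.init
  rules : ∀ q f, Option.Rel (LTWRule.Covers · π ·) (M.rules (π q) f) (M'.rules q f)

namespace LTW.IsCover

variable {M : LTW F ar Δ Q} {M' : LTW F ar Δ Q'} {M'' : LTW F ar Δ Q''}
  {π : Q' → Q} {π' : Q'' → Q'}

theorem comp (h : M.IsCover π M') (h' : M'.IsCover π' M'') : M.IsCover (π ∘ π') M'' where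
  map_init := by rw [Function.comp_apply, h'.map_init, h.map_init]
  rules q f := optionRel_trans (fun hc hc' => hc.comp hc') (h.rules (π' q) f) (h'.rules q f)

theorem eq_of_coReach (h : M.IsCover π M') {q : Q} {q' : Q'} (hq : CoReach M M' q q') :
    q = π q' := by
  induction hq with
  | base => exact h.map_init.symm
  | @step q q' f r r' i j _ hr hr' hij ih =>
    subst ih
    have hc : r.Covers π r' := by simpa [hr, hr'] using h.rules q' f
    rw [hc.perm_eq] at hij
    rw [hc.map_st, r'.perm.injective hij]

theorem sameOrdered (h : M.IsCover π M') : SameOrdered M M' := by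
  intro q q' hq f
  obtain rfl := h.eq_of_coReach hq
  have hrule := h.rules q' f
  generalize M.rules (π q') f = o, M'.rules q' f = o' at hrule ⊢
  cases hrule with
  | none => exact .inl ⟨rfl, rfl⟩
  | some hc => exact .inr ⟨_, _, rfl, rfl, hc.perm_eq⟩

theorem semState_rel (h : M.IsCover π M') {R : Q' → List Δ → List Δ → Prop}
    (hR : ∀ q f r r', M.rules (π q) f = some r → M'.rules q f = some r' → ∀ xs ds,
      (∀ i, R (r'.st i) (xs i) (ds i)) →
        R q (interleave (ar f) r.word xs) (interleave (ar f) r'.word ds))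
    (t : RTree F ar) (q : Q') : Option.Rel (R q) (M.semState t (π q)) (M'.semState t q) := by
  induction t generalizing q with
  | node f ts ih =>
    cases hx : M.semState (.node f ts) (π q) with
    | some x =>
      obtain ⟨r, xs, hr, hxs, rfl⟩ := semState_node_eq_some_iff.mp hx
      obtain ⟨r', hr', hc⟩ := optionRel_some_left_iff.mp (hr ▸ h.rules q f)
      have hchild (i) : ∃ d, M'.semState (ts (r'.perm i)) (r'.st i) = some d ∧
          R (r'.st i) (xs i) d := by
        rw [← optionRel_some_left_iff, ← hxs, hc.perm_eq, ← hc.map_st]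
        exact ih _ _
      choose ds hds hrel using hchild
      rw [semState_node_eq_some_iff.mpr ⟨r', ds, hr', hds, rfl⟩]
      exact .some (hR q f r r' hr hr' xs ds hrel)
    | none =>
      cases hd : M'.semState (.node f ts) q with
      | none => exact .none
      | some d =>
        obtain ⟨r', ds, hr', hds, rfl⟩ := semState_node_eq_some_iff.mp hd
        obtain ⟨r, hr, hc⟩ := optionRel_some_right_iff.mp (hr' ▸ h.rules q f)
        have hchild (i) : ∃ x, M.semState (ts (r.perm i)) (r.st i) = some x ∧
            R (r'.st i) x (ds i) := by
          rw [← optionRel_some_right_iff, ← hds, hc.perm_eq, ← hc.map_st]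
          exact ih _ _
        choose xs hxs _ using hchild
        rw [semState_node_eq_some_iff.mpr ⟨r, xs, hr, hxs, rfl⟩] at hx
        cases hx

theorem nonemptyDoms (h : M.IsCover π M') (hM : M.NonemptyDoms) : M'.NonemptyDoms := by
  intro q
  obtain ⟨t, x, hx⟩ := hM (π q)
  have hrel := h.semState_rel (R := fun _ _ _ => True) (fun _ _ _ _ _ _ _ _ _ => trivial) t q
  obtain ⟨d, hd, -⟩ := optionRel_some_left_iff.mp (hx ▸ hrel)
  exact ⟨t, d, hd⟩

end LTW.IsCover

/-! ### Reversal -/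

/-- The rule with its right-hand side read from right to left. -/
def LTWRule.reverse {n : ℕ} (r : LTWRule Δ Q n) : LTWRule Δ Q n where
  word i := (r.word i.rev).reverse
  st i := r.st i.rev
  perm := Fin.revPerm.trans r.perm

/-- The transducer that produces the mirror images of the outputs of `M`; it exchanges longest
common prefixes and longest common suffixes. -/
def LTW.reverse (M : LTW F ar Δ Q) : LTW F ar Δ Q where
  pre := M.post.reverse
  init := M.init
  post := M.pre.reverse
  rules q f := (M.rules q f).map LTWRule.reverse

theorem LTWRule.reverse_reverse {n : ℕ} (r : LTWRule Δ Q n) : r.reverse.reverse = r := by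
  have hperm : Fin.revPerm.trans (Fin.revPerm.trans r.perm) = r.perm := by
    ext i
    simp
  simp [LTWRule.reverse, hperm]

theorem LTWRule.Covers.reverse {n : ℕ} {r : LTWRule Δ Q n} {π : Q' → Q} {r' : LTWRule Δ Q' n}
    (h : r.Covers π r') : r.reverse.Covers π r'.reverse where
  perm_eq := by rw [LTWRule.reverse, LTWRule.reverse, h.perm_eq]
  map_st i := h.map_st i.rev

namespace LTW

variable {M : LTW F ar Δ Q}

theorem reverse_reverse (M : LTW F ar Δ Q) : M.reverse.reverse = M := by
  simp [LTW.reverse, Function.comp_def, LTWRule.reverse_reverse]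

theorem IsCover.reverse {M' : LTW F ar Δ Q'} {π : Q' → Q} (h : M.IsCover π M') :
    M.reverse.IsCover π M'.reverse where
  map_init := h.map_init
  rules q f := by
    have hrule := h.rules q f
    simp only [LTW.reverse]
    generalize M.rules (π q) f = o, M'.rules q f = o' at hrule ⊢
    cases hrule with
    | none => exact .none
    | some hc => exact .some hc.reverse

theorem semState_reverse_of_eq_some {t : RTree F ar} {q : Q} {w : List Δ}
    (h : M.semState t q = some w) : M.reverse.semState t q = some w.reverse := by
  induction t generalizing q w with
  | node f ts ih =>
    obtain ⟨r, ws, hr, hws, rfl⟩ := semState_node_eq_some_iff.mp h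
    refine semState_node_eq_some_iff.mpr ⟨r.reverse, fun i => (ws i.rev).reverse, ?_,
      fun i => ih _ (hws i.rev), (interleave_reverse r.word ws).symm⟩
    simp [LTW.reverse, hr]

theorem semState_reverse_eq_some_iff {t : RTree F ar} {q : Q} {w : List Δ} :
    M.reverse.semState t q = some w ↔ M.semState t q = some w.reverse := by
  refine ⟨fun h => ?_, fun h => ?_⟩
  · simpa only [reverse_reverse] using semState_reverse_of_eq_some h
  · simpa only [List.reverse_reverse] using semState_reverse_of_eq_some h

theorem sem_reverse (M : LTW F ar Δ Q) (t : RTree F ar) :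
    M.reverse.sem t = (M.sem t).map List.reverse := by
  have hstate : M.reverse.semState t M.init = (M.semState t M.init).map List.reverse := by
    ext w
    rw [semState_reverse_eq_some_iff, Option.map_eq_some_iff]
    exact ⟨fun h => ⟨_, h, w.reverse_reverse⟩, by rintro ⟨x, hx, rfl⟩; rwa [List.reverse_reverse]⟩
  change (M.reverse.semState t M.init).map _ = _
  rw [hstate]
  simp [LTW.sem, LTW.reverse, Function.comp_def]

theorem NonemptyDoms.reverse (hM : M.NonemptyDoms) : M.reverse.NonemptyDoms := by
  intro q
  obtain ⟨t, w, hw⟩ := hM q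
  exact ⟨t, _, semState_reverse_of_eq_some hw⟩

theorem lcsEps_lang_reverse {q : Q} (h : LcpEps (M.lang q)) : LcsEps (M.reverse.lang q) := by
  intro w hw
  refine List.reverse_eq_nil_iff.mp (h w.reverse ?_)
  rintro x ⟨t, hx⟩
  exact List.reverse_suffix.mp <| by
    simpa using hw x.reverse ⟨t, semState_reverse_of_eq_some hx⟩

end LTW

/-! ### The pushed transducer -/

/-- A state of the pushed transducer: a state of `M` together with a reduced carry for the core of
its output language. -/
structure PushState (M : LTW F ar Δ Q) where
  state : Q
  carry : List Δ
  isReducedCarry : IsReducedCarry (core (M.lang state)) carry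

namespace PushState

variable {M : LTW F ar Δ Q}

/-- The state `s` is to output `d` on the trees on which `s.state` outputs `x`. -/
def Outputs (s : PushState M) (x d : List Δ) : Prop := Pushes (M.lang s.state) s.carry x d

/-- The intended output language of `s`. -/
def lang (s : PushState M) : Set (List Δ) := conj (core (M.lang s.state)) s.carry

instance [Finite Q] : Finite (PushState M) := by
  have (q : Q) : Finite {v | IsReducedCarry (core (M.lang q)) v} :=
    (finite_isReducedCarry _).to_subtype
  let toSigma (s : PushState M) : (q : Q) × {v | IsReducedCarry (core (M.lang q)) v} :=
    ⟨s.state, s.carry, s.isReducedCarry⟩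
  refine Finite.of_injective toSigma ?_
  rintro ⟨q, v, hv⟩ ⟨q', v', hv'⟩ h
  cases h
  rfl

theorem lcpEps_lang (hM : M.NonemptyDoms) (s : PushState M) : LcpEps s.lang :=
  s.isReducedCarry.1.lcpEps_conj (lcpEps_core (hM.lang_nonempty s.state))

theorem lcsEps_lang (hM : M.NonemptyDoms) (s : PushState M) (h : LcsEps (M.lang s.state)) :
    LcsEps s.lang :=
  s.isReducedCarry.1.lcsEps_conj (lcpEps_core (hM.lang_nonempty s.state)) h.core

end PushState

/-- The rule `r'` of the pushed transducer for the state `s` implements the rule `r` of `M` for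
`s.state`. -/
structure IsPushRule {M : LTW F ar Δ Q} (s : PushState M) {n : ℕ} (r : LTWRule Δ Q n)
    (r' : LTWRule Δ (PushState M) n) : Prop where
  covers : r.Covers PushState.state r'
  lcpEps : ∀ i, LcpEps (appendLang (r'.st i).lang (r'.word i.succ))
  outputs : ∀ xs ds, (∀ i, (r'.st i).Outputs (xs i) (ds i)) →
    s.Outputs (interleave n r.word xs) (interleave n r'.word ds)

theorem exists_isPushRule {M : LTW F ar Δ Q} (hM : M.NonemptyDoms) (s : PushState M) {f : F}
    {r : LTWRule Δ Q (ar f)} (hr : M.rules s.state f = some r) : ∃ r', IsPushRule s r r' := by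
  obtain ⟨u, v, hv, hlcp, hout⟩ := exists_push_rule s.isReducedCarry.1 r.word
    (fun i => hM.lang_nonempty (r.st i)) fun xs hxs => LTW.interleave_mem_lang hr hxs
  exact ⟨⟨u, fun i => ⟨r.st i, v i, hv i⟩, r.perm⟩, ⟨rfl, fun _ => rfl⟩, hlcp, hout⟩

/-- `N` results from `M` by pushing output words to the left as far as possible. -/
structure LTW.IsPush (M : LTW F ar Δ Q) (N : LTW F ar Δ (PushState M)) : Prop where
  init_state : N.init.state = M.init
  outputs_init : ∀ x d, N.init.Outputs x d → M.pre ++ x ++ M.post = N.pre ++ d ++ N.post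
  rules : ∀ s f, Option.Rel (IsPushRule s) (M.rules s.state f) (N.rules s f)

theorem LTW.exists_isPush {M : LTW F ar Δ Q} (hM : M.NonemptyDoms) : ∃ N, M.IsPush N := by
  have hrules (s : PushState M) (f : F) :
      ∃ o, Option.Rel (IsPushRule s) (M.rules s.state f) o := by
    cases hr : M.rules s.state f with
    | none => exact ⟨none, .none⟩
    | some r => exact (exists_isPushRule hM s hr).imp' some fun _ => .some
  choose rules hrules using hrules
  obtain ⟨a, v, w, hv, -, heq⟩ := exists_push (hM.lang_nonempty M.init) M.post
  refine ⟨⟨M.pre ++ a, ⟨M.init, v, hv⟩, w, rules⟩, rfl, fun x d h => ?_, hrules⟩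
  simp only [List.append_assoc, heq x d h]

/-- The conditions on an earliest transducer other than those on common suffixes. -/
structure LTW.LeftEarliest (M : LTW F ar Δ Q) : Prop where
  lcpEps_lang : ∀ q, LcpEps (M.lang q)
  lcpEps_rule : ∀ q f r, M.rules q f = some r →
    ∀ i, LcpEps (appendLang (M.lang (r.st i)) (r.word i.succ))

namespace LTW.IsPush

variable {M : LTW F ar Δ Q} {N : LTW F ar Δ (PushState M)}

theorem isCover (h : M.IsPush N) : M.IsCover PushState.state N where
  map_init := h.init_state
  rules s f := by
    have hrule := h.rules s f
    generalize M.rules s.state f = o, N.rules s f = o' at hrule ⊢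
    cases hrule with
    | none => exact .none
    | some hr => exact .some hr.covers

theorem outputs_semState (h : M.IsPush N) (t : RTree F ar) (s : PushState M) :
    Option.Rel s.Outputs (M.semState t s.state) (N.semState t s) := by
  refine h.isCover.semState_rel (R := PushState.Outputs) (fun s f r r' hr hr' => ?_) t s
  have hrule : IsPushRule s r r' := by simpa only [hr, hr', Option.rel_some_some] using h.rules s f
  exact hrule.outputs

theorem lang_eq (h : M.IsPush N) (s : PushState M) : N.lang s = s.lang := by
  ext d
  constructor
  · rintro ⟨t, ht⟩
    obtain ⟨x, -, hx⟩ := optionRel_some_right_iff.mp (ht ▸ h.outputs_semState t s)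
    exact mem_conj_core_iff.mpr ⟨x, hx⟩
  · intro hd
    obtain ⟨x, hx⟩ := mem_conj_core_iff.mp hd
    obtain ⟨t, ht⟩ := hx.mem
    obtain ⟨d', hd', hx'⟩ := optionRel_some_left_iff.mp (ht ▸ h.outputs_semState t s)
    rw [hx.unique hx']
    exact ⟨t, hd'⟩

theorem sem_eq (h : M.IsPush N) : M.sem = N.sem := by
  funext t
  have hrel := h.outputs_semState t N.init
  rw [h.init_state] at hrel
  simp only [LTW.sem]
  generalize M.semState t M.init = o, N.semState t N.init = o' at hrel ⊢
  cases hrel with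
  | none => rfl
  | some hxd => exact congrArg some (h.outputs_init _ _ hxd)

theorem leftEarliest (h : M.IsPush N) (hM : M.NonemptyDoms) : N.LeftEarliest where
  lcpEps_lang s := h.lang_eq s ▸ s.lcpEps_lang hM
  lcpEps_rule s f r' hr' i := by
    obtain ⟨r, -, hrule⟩ := optionRel_some_right_iff.mp (hr' ▸ h.rules s f)
    rw [h.lang_eq]
    exact hrule.lcpEps i

theorem lcsEps_lang (h : M.IsPush N) (hM : M.NonemptyDoms) {s : PushState M}
    (hs : LcsEps (M.lang s.state)) : LcsEps (N.lang s) :=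
  h.lang_eq s ▸ s.lcsEps_lang hM hs

end LTW.IsPush

theorem LTW.exists_isCover_lcsEps {M : LTW F ar Δ Q} (hM : M.NonemptyDoms) :
    ∃ (Q' : Type) (M' : LTW F ar Δ Q') (π : Q' → Q), (Finite Q → Finite Q') ∧
      M.sem = M'.sem ∧ M.IsCover π M' ∧ ∀ q, LcsEps (M'.lang q) := by
  obtain ⟨N, hN⟩ := LTW.exists_isPush hM.reverse
  refine ⟨_, N.reverse, PushState.state, fun _ => inferInstance, ?_, ?_, fun q => ?_⟩
  · funext t
    rw [sem_reverse, ← hN.sem_eq, ← sem_reverse, reverse_reverse]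
  · simpa only [reverse_reverse] using hN.isCover.reverse
  · exact lcsEps_lang_reverse ((hN.leftEarliest hM.reverse).lcpEps_lang q)

end Transducers

theorem exists_equivalent_earliest_sameOrdered_general {F Δ Q : Type} {ar : F → ℕ}
    (M : LTW F ar Δ Q) (hdom : M.NonemptyDoms) :
    ∃ (Q' : Type) (M' : LTW F ar Δ Q'), (Finite Q → Finite Q') ∧
      M.sem = M'.sem ∧ M'.Earliest ∧ SameOrdered M M' := by
  obtain ⟨Q₁, M₁, π, hfin, hsem, hcover, hlcs⟩ := LTW.exists_isCover_lcsEps hdom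
  have hdom₁ : M₁.NonemptyDoms := hcover.nonemptyDoms hdom
  obtain ⟨N, hN⟩ := LTW.exists_isPush hdom₁
  have hleft : N.LeftEarliest := hN.leftEarliest hdom₁
  refine ⟨_, N, fun hQ => ?_, hsem.trans hN.sem_eq, ⟨fun s => ⟨hleft.lcpEps_lang s, ?_⟩, ?_⟩,
    (hcover.comp hN.isCover).sameOrdered⟩
  · have := hfin hQ
    infer_instance
  · exact hN.lcsEps_lang hdom₁ (hlcs s.state)
  · exact hleft.lcpEps_rule

/-- every LTW has an equivalent earliest LTW that is same-ordered with it. -/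
theorem exists_equivalent_earliest_sameOrdered
    {F Δ Q : Type} {ar : F → ℕ} [Finite Q]
    (M : LTW F ar Δ Q) (hdom : M.NonemptyDoms) :
    ∃ (Q' : Type) (_ : Finite Q') (M' : LTW F ar Δ Q'),
      M.sem = M'.sem ∧ M'.Earliest ∧ SameOrdered M M' := by
  obtain ⟨Q', M', hfin, h⟩ := exists_equivalent_earliest_sameOrdered_general M hdom
  exact ⟨Q', hfin ‹Finite Q›, M', h⟩

end LTWpaper
end

section
/- Let Δ be an alphabet and let u, w, u_l, u_r ∈ Δ* be words. Consider the two-sided quotient L = { x ∈ Δ* : u_l x u_r ∈ u w* }, where u w* = { u wⁿ : n ∈ ℕ }. Then L is empty, or L is a singleton, or there exist a word h ∈ Δ* and a cyclic rotation p of w (i.e., w = w₁ w₂ and p = w₂ w₁ for some decomposition) such that L ⊆ h p* = { h pⁿ : n ∈ ℕ }. -/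
namespace LTWpaper

/-!
Two words `x₀` and `x` of the quotient, sitting inside `u wⁿ` and `u wⁿ⁺ᵏ`, satisfy `x = x₀ y` with
`y uᵣ = uᵣ wᵏ`. Taking `n` minimal, the quotient is `x₀ Y`, where `Y` is the set of all `y` such
that `y uᵣ = uᵣ wᵏ` for some `k`. If `Y` contains some `y ≠ ε`, iterating the equation `m` times,
for `m` so large that `yᵐ` is no shorter than `uᵣ`, exhibits `uᵣ` as a suffix of a power of `w`.
Peeling off copies of `w` then gives a rotation `p` of `w` with `p uᵣ = uᵣ w`, and so `Y = p*` by
cancellation.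
-/

/-- The language `h p*` of handle `h` and period `p`, in an arbitrary monoid. -/
def handlePowers {M : Type*} [Monoid M] (h p : M) : Set M :=
  (h * ·) '' (Submonoid.powers p : Set M)

/-- The two-sided quotient `a⁻¹ L b⁻¹`. -/
def twoSidedQuotient {M : Type*} [Mul M] (a b : M) (L : Set M) : Set M :=
  {x | a * x * b ∈ L}

/-- The elements `y` that conjugate to some power of `w` through `r`, i.e. `r wᵏ = y r`. -/
def powConjugates {M : Type*} [Monoid M] (r w : M) : Set M :=
  {y | ∃ k : ℕ, SemiconjBy r (w ^ k) y}

section Monoid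

variable {M : Type*}

theorem mem_handlePowers [Monoid M] {h p x : M} :
    x ∈ handlePowers h p ↔ ∃ n : ℕ, x = h * p ^ n := by
  simp only [handlePowers, Set.mem_image, SetLike.mem_coe, Submonoid.mem_powers_iff,
    exists_exists_eq_and, eq_comm (a := x)]

theorem one_mem_powConjugates [Monoid M] (r w : M) : 1 ∈ powConjugates r w :=
  ⟨0, by simp only [pow_zero, SemiconjBy.one_right]⟩

theorem powConjugates_eq_powers [RightCancelMonoid M] {r w p : M} (h : SemiconjBy r w p) :
    powConjugates r w = (Submonoid.powers p : Set M) := by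
  ext y
  constructor
  · rintro ⟨k, hy⟩
    exact ⟨k, mul_right_cancel ((h.pow_right k).eq.symm.trans hy.eq)⟩
  · rintro ⟨k, rfl⟩
    exact ⟨k, h.pow_right k⟩

end Monoid

section FreeMonoid

variable {α : Type*} {a b c d r w y z : FreeMonoid α}

theorem mul_eq_mul_iff_exists :
    a * b = c * d ↔ (∃ t, c = a * t ∧ b = t * d) ∨ ∃ t, a = c * t ∧ d = t * b :=
  List.append_eq_append_iff

theorem exists_eq_mul_of_mul_eq_mul (h : a * b = c * d) (hac : a.length ≤ c.length) :
    ∃ t, c = a * t ∧ b = t * d := by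
  obtain ht | ⟨t, rfl, rfl⟩ := mul_eq_mul_iff_exists.1 h
  · exact ht
  · rw [FreeMonoid.length_mul] at hac
    obtain rfl : t = 1 := FreeMonoid.length_eq_zero.1 (by lia)
    exact ⟨1, by simp only [mul_one], by simp only [one_mul]⟩

theorem le_length_pow (hy : y ≠ 1) (n : ℕ) : n ≤ (y ^ n).length := by
  have hpos : 0 < y.length := Nat.pos_of_ne_zero (mt FreeMonoid.length_eq_zero.1 hy)
  induction n with
  | zero => exact Nat.zero_le _
  | succ n ih =>
    rw [pow_succ, FreeMonoid.length_mul]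
    lia

theorem exists_pow_eq_mul_of_semiconjBy (h : SemiconjBy r z y) (hy : y ≠ 1) :
    ∃ (m : ℕ) (t : FreeMonoid α), z ^ m = t * r := by
  obtain ⟨t, -, ht⟩ :=
    exists_eq_mul_of_mul_eq_mul (h.pow_right r.length).eq (le_length_pow hy r.length)
  exact ⟨r.length, t, ht⟩

theorem exists_rotation_semiconjBy_of_pow_eq_mul {n : ℕ} (h : w ^ n = c * r) :
    ∃ w₁ w₂, w = w₁ * w₂ ∧ SemiconjBy r w (w₂ * w₁) := by
  induction n generalizing r with
  | zero =>
    obtain ⟨-, rfl⟩ : c = 1 ∧ r = 1 := List.append_eq_nil_iff.1 h.symm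
    exact ⟨w, 1, (mul_one w).symm, by simp only [one_mul, SemiconjBy.one_left]⟩
  | succ n ih =>
    rw [pow_succ] at h
    obtain ⟨t, -, rfl⟩ | ⟨r', hr', rfl⟩ := mul_eq_mul_iff_exists.1 h
    · exact ⟨t, r, rfl, (mul_assoc r t r).symm⟩
    · obtain ⟨w₁, w₂, hw, hr⟩ := ih hr'
      exact ⟨w₁, w₂, hw, hr.mul_left (Commute.refl w)⟩

theorem powConjugates_eq_one_or_eq_powers (r w : FreeMonoid α) :
    powConjugates r w = {1} ∨
      ∃ w₁ w₂, w = w₁ * w₂ ∧ powConjugates r w = (Submonoid.powers (w₂ * w₁) : Set _) := by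
  refine (Set.eq_singleton_or_nontrivial (one_mem_powConjugates r w)).imp_right fun hY ↦ ?_
  obtain ⟨y, ⟨k, hk⟩, hy⟩ := hY.exists_ne 1
  obtain ⟨m, t, ht⟩ := exists_pow_eq_mul_of_semiconjBy hk hy
  rw [← pow_mul] at ht
  obtain ⟨w₁, w₂, hw, hr⟩ := exists_rotation_semiconjBy_of_pow_eq_mul ht
  exact ⟨w₁, w₂, hw, powConjugates_eq_powers hr⟩

theorem mul_mul_eq_mul_mul_mul_iff {x₀ x : FreeMonoid α} :
    a * x * r = a * x₀ * r * z ↔ ∃ y, SemiconjBy r z y ∧ x₀ * y = x := by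
  constructor
  · intro h
    have hcancel : x₀ * (r * z) = x * r :=
      mul_left_cancel (a := a) (by simpa only [mul_assoc] using h.symm)
    have hlen : x₀.length ≤ x.length := by
      have := congrArg FreeMonoid.length hcancel
      simp only [FreeMonoid.length_mul] at this
      lia
    obtain ⟨y, hx, hy⟩ := exists_eq_mul_of_mul_eq_mul hcancel hlen
    exact ⟨y, hy, hx.symm⟩
  · rintro ⟨y, hy, rfl⟩
    simp only [mul_assoc, hy.eq]

theorem exists_twoSidedQuotient_eq_image_powConjugates {u w uₗ uᵣ : FreeMonoid α}
    (hL : (twoSidedQuotient uₗ uᵣ (handlePowers u w)).Nonempty) :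
    ∃ x₀, twoSidedQuotient uₗ uᵣ (handlePowers u w) = (x₀ * ·) '' powConjugates uᵣ w := by
  classical
  have hexp : ∃ n x, uₗ * x * uᵣ = u * w ^ n := by
    obtain ⟨x, hx⟩ := hL
    obtain ⟨n, hn⟩ := mem_handlePowers.1 hx
    exact ⟨n, x, hn⟩
  obtain ⟨x₀, hx₀⟩ := Nat.find_spec hexp
  have hshift (x : FreeMonoid α) (k : ℕ) :
      uₗ * x * uᵣ = u * w ^ (Nat.find hexp + k) ↔ ∃ y, SemiconjBy uᵣ (w ^ k) y ∧ x₀ * y = x := by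
    rw [pow_add, ← mul_assoc, ← hx₀, mul_mul_eq_mul_mul_mul_iff]
  refine ⟨x₀, Set.ext fun x ↦ ?_⟩
  constructor
  · intro hx
    obtain ⟨n, hn⟩ := mem_handlePowers.1 hx
    obtain ⟨k, rfl⟩ := Nat.exists_eq_add_of_le (Nat.find_min' hexp ⟨x, hn⟩)
    obtain ⟨y, hy, hxy⟩ := (hshift x k).1 hn
    exact ⟨y, ⟨k, hy⟩, hxy⟩
  · rintro ⟨y, ⟨k, hy⟩, hxy⟩
    exact mem_handlePowers.2 ⟨_, (hshift x k).2 ⟨y, hy, hxy⟩⟩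

theorem quotient_of_quasiPeriodic_left_general (u w uₗ uᵣ : FreeMonoid α) :
    twoSidedQuotient uₗ uᵣ (handlePowers u w) = ∅ ∨
    (∃ x, twoSidedQuotient uₗ uᵣ (handlePowers u w) = {x}) ∨
    ∃ h w₁ w₂, w = w₁ * w₂ ∧
      twoSidedQuotient uₗ uᵣ (handlePowers u w) = handlePowers h (w₂ * w₁) := by
  refine (Set.eq_empty_or_nonempty _).imp_right fun hL ↦ ?_
  obtain ⟨x₀, hx₀⟩ := exists_twoSidedQuotient_eq_image_powConjugates hL
  rw [hx₀]
  obtain hY | ⟨w₁, w₂, hw, hY⟩ := powConjugates_eq_one_or_eq_powers uᵣ w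
  · exact .inl ⟨x₀, by simp only [hY, Set.image_singleton, mul_one]⟩
  · exact .inr ⟨x₀, w₁, w₂, hw, by rw [hY, handlePowers]⟩

end FreeMonoid

theorem ofList_listPow {Δ : Type} (w : List Δ) (n : ℕ) :
    FreeMonoid.ofList (listPow w n) = FreeMonoid.ofList w ^ n := by
  induction n with
  | zero => rfl
  | succ n ih => rw [listPow, FreeMonoid.ofList_append, ih, pow_succ']

theorem ofList_mem_handlePowers {Δ : Type} {h p x : List Δ} :
    FreeMonoid.ofList x ∈ handlePowers (FreeMonoid.ofList h) (FreeMonoid.ofList p) ↔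
      ∃ n : ℕ, x = h ++ listPow p n := by
  simp only [mem_handlePowers, ← ofList_listPow, ← FreeMonoid.ofList_append,
    EmbeddingLike.apply_eq_iff_eq]

/-- a two-sided quotient of `u w*` is empty, a singleton, or contained in
`h p*` for some handle `h` and some cyclic rotation `p` of `w`. -/
theorem quotient_of_quasiPeriodic_left
    {Δ : Type} (u w uₗ uᵣ : List Δ) :
    {x : List Δ | ∃ n : ℕ, uₗ ++ x ++ uᵣ = u ++ listPow w n} = ∅ ∨
    (∃ x : List Δ, {x : List Δ | ∃ n : ℕ, uₗ ++ x ++ uᵣ = u ++ listPow w n} = {x}) ∨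
    ∃ (h : List Δ) (w₁ w₂ : List Δ), w = w₁ ++ w₂ ∧
      ∀ x ∈ {x : List Δ | ∃ n : ℕ, uₗ ++ x ++ uᵣ = u ++ listPow w n},
        ∃ n : ℕ, x = h ++ listPow (w₂ ++ w₁) n := by
  simp only [← ofList_mem_handlePowers]
  obtain hL | ⟨x, hL⟩ | ⟨h, w₁, w₂, hw, hL⟩ :=
    quotient_of_quasiPeriodic_left_general (.ofList u) (.ofList w) (.ofList uₗ) (.ofList uᵣ)
  -- `FreeMonoid Δ` unfolds to `List Δ`, and `hL` to a statement about the set in the goal.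
  · exact .inl hL
  · exact .inr (.inl ⟨x.toList, hL⟩)
  · exact .inr (.inr ⟨h.toList, w₁.toList, w₂.toList, hw, fun _ hx ↦ hL.subset hx⟩)

end LTWpaper
end
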